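/- Let 𝒳 be a finite nonempty alphabet, m ≥ 1 an integer, ξ : 𝒳^m → ℝ any function, x ∈ 𝒳^m, and η > 0 a real number. Let A = {v ∈ 𝒳^m : ξ(v) ≥ ξ(x)} (which is nonempty since x ∈ A), and let l = log₂|A| be the code length needed to specify an element of A. Then the MDL preference condition log₂ η + l < m · log₂|𝒳| holds if and only if the a-contrario condition η · P[ξ(V) ≥ ξ(x)] < 1 holds, where V is uniformly distributed on 𝒳^m, i.e., P[ξ(V) ≥ ξ(x)] = |A| / |𝒳|^m. -/

import Mathlib

/-- Equivalence of the MDL-by-parts preference condition and the a-contrario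
condition (with `ε = 1`): with `A = {v : ξ v ≥ ξ x}` and `l = log₂ |A|`,
`log₂ η + l < m log₂ |𝒳|` iff `η · (|A|/|𝒳|^m) < 1`, where `|A|/|𝒳|^m` is the
probability `P[ξ(V) ≥ ξ(x)]` under the uniform background model on `𝒳^m`. -/
theorem stmt_13 {𝒳 : Type*} [Fintype 𝒳] [Nonempty 𝒳] (m : ℕ) (hm : 1 ≤ m)
    (ξ : (Fin m → 𝒳) → ℝ) (x : Fin m → 𝒳) (η : ℝ) (hη : 0 < η)
    (A : Finset (Fin m → 𝒳)) (hA : A = Finset.univ.filter (fun v => ξ x ≤ ξ v))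
    (l : ℝ) (hl : l = Real.logb 2 (A.card : ℝ)) :
    (Real.logb 2 η + l < (m : ℝ) * Real.logb 2 (Fintype.card 𝒳 : ℝ)) ↔
      (η * ((A.card : ℝ) / (Fintype.card 𝒳 : ℝ) ^ m) < 1) := by
  -- `x ∈ A`, so `|A| > 0` and the logarithm of `|A|` is not a junk value.
  have hA0 : (0 : ℝ) < A.card := by
    exact_mod_cast Finset.card_pos.mpr ⟨x, by simp [hA]⟩
  have hX : (0 : ℝ) < Fintype.card 𝒳 := by exact_mod_cast Fintype.card_pos
  have hXm : (0 : ℝ) < (Fintype.card 𝒳 : ℝ) ^ m := pow_pos hX m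
  rw [hl, ← Real.logb_mul hη.ne' hA0.ne', ← Real.logb_pow,
    Real.logb_lt_logb_iff one_lt_two (mul_pos hη hA0) hXm, ← mul_div_assoc, div_lt_one hXm]
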